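/- Let M = max { Σ_{e∈B} w(e) : B ⊆ E such that every vertex of V is incident to at most 2 edges of B } be the maximum weight of a simple 2-matching. Then OPT ≤ k · M; equivalently, M ≥ OPT/k. -/

import Mathlib

open Classical in
/-- The Ext-TSP value of an ordering `d` of the vertices of `G`. -/
noncomputable def extVal {V : Type} [Fintype V] (G : SimpleGraph V)
    (w : V → V → ℝ) (f : ℕ → ℝ) (d : V ≃ Fin (Fintype.card V)) : ℝ :=
  (1 / 2) * ∑ u : V, ∑ v : V,
    if G.Adj u v then f (Nat.dist (d u) (d v)) * w u v else 0

/-!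
The edges whose endpoints lie at one fixed distance in an ordering form a simple 2-matching, since a
vertex in position `p` has at most the neighbours in positions `p + i` and `p - i`. Splitting the
value of the ordering by distance gives `OPT ≤ (∑ i, f i) * M`, for any nonnegative discounts and
real weights. A discount function bounded by `1` and vanishing beyond `k` has `∑ i, f i ≤ k`.
-/

/-- The distance between the endpoints of an unordered pair when vertex `v` is placed at position
`pos v`. It is the grouping key for the edges of an ordering; positions are arbitrary naturals. -/
def pairDist {V : Type*} (pos : V → ℕ) : Sym2 V → ℕ :=
  Sym2.lift ⟨fun u v => Nat.dist (pos u) (pos v), fun _ _ => Nat.dist_comm _ _⟩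

theorem pairDist_mem_Ico {V : Type*} {pos : V → ℕ} {n : ℕ} (hpos : Function.Injective pos)
    (hlt : ∀ v, pos v < n) {e : Sym2 V} (he : ¬e.IsDiag) : pairDist pos e ∈ Finset.Ico 1 n := by
  induction e with
  | _ u v =>
    have hne : pos u ≠ pos v := fun h => he (hpos h)
    have hu := hlt u
    have hv := hlt v
    change Nat.dist (pos u) (pos v) ∈ Finset.Ico 1 n
    rw [Finset.mem_Ico, Nat.dist]
    omega

theorem card_filter_pairDist_eq_le_two {V : Type*} [DecidableEq V] {pos : V → ℕ}
    (hpos : Function.Injective pos) (S : Finset (Sym2 V)) (i : ℕ) (v : V) :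
    ((S.filter fun e => pairDist pos e = i).filter fun e => v ∈ e).card ≤ 2 := by
  have hmaps : ∀ e ∈ (S.filter fun e => pairDist pos e = i).filter fun e => v ∈ e,
      Sym2.map pos e ∈ ({s(pos v, pos v + i), s(pos v, pos v - i)} : Finset (Sym2 ℕ)) := by
    intro e he
    obtain ⟨heS, u, rfl⟩ := Finset.mem_filter.mp he
    have hdist : Nat.dist (pos v) (pos u) = i := (Finset.mem_filter.mp heS).2
    have hu : pos u = pos v + i ∨ pos u = pos v - i := by
      rw [Nat.dist] at hdist
      omega
    rw [Sym2.map_mk, Finset.mem_insert, Finset.mem_singleton]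
    exact hu.imp (congrArg (s(pos v, ·))) (congrArg (s(pos v, ·)))
  exact (Finset.card_le_card_of_injOn _ hmaps (Sym2.map.injective hpos).injOn).trans
    Finset.card_le_two

section EdgeSums

variable {V : Type*} [Fintype V] (G : SimpleGraph V) [DecidableRel G.Adj]
  {A : Type*} [AddCommMonoid A]

theorem sum_sum_adj_eq_sum_dart (g : V → V → A) :
    (∑ u, ∑ v, if G.Adj u v then g u v else 0) = ∑ a : G.Dart, g a.fst a.snd := by
  rw [← Fintype.sum_prod_type' fun u v => if G.Adj u v then g u v else 0, ← Finset.sum_filter]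
  exact (Finset.sum_bij (fun a _ => a.toProd)
    (fun a _ => Finset.mem_filter.mpr ⟨Finset.mem_univ _, a.adj⟩)
    (fun _ _ _ _ h => SimpleGraph.Dart.toProd_injective h)
    (fun p hp => ⟨⟨p, (Finset.mem_filter.mp hp).2⟩, Finset.mem_univ _, rfl⟩)
    (fun _ _ => rfl)).symm

theorem sum_sum_adj_eq_two_nsmul_sum_edgeFinset (g : Sym2 V → A) :
    (∑ u, ∑ v, if G.Adj u v then g s(u, v) else 0) = 2 • ∑ e ∈ G.edgeFinset, g e := by
  classical
  have hmaps : ∀ a ∈ (Finset.univ : Finset G.Dart), a.edge ∈ G.edgeFinset :=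
    fun a _ => SimpleGraph.mem_edgeFinset.mpr a.edge_mem
  calc (∑ u, ∑ v, if G.Adj u v then g s(u, v) else 0)
      = ∑ a : G.Dart, g a.edge := sum_sum_adj_eq_sum_dart G fun u v => g s(u, v)
    _ = ∑ e ∈ G.edgeFinset, ∑ a : G.Dart with a.edge = e, g e :=
        (Finset.sum_fiberwise_of_maps_to' hmaps g).symm
    _ = ∑ e ∈ G.edgeFinset, 2 • g e := by
        refine Finset.sum_congr rfl fun e he => ?_
        rw [Finset.sum_const, G.dart_edge_fiber_card e (SimpleGraph.mem_edgeFinset.mp he)]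
    _ = 2 • ∑ e ∈ G.edgeFinset, g e := Finset.smul_sum.symm

end EdgeSums

section SimpleTwoMatching

variable {V : Type*} [Fintype V] [DecidableEq V] (G : SimpleGraph V) [DecidableRel G.Adj]

/-- A simple 2-matching of `G`: a set of edges, each used at most once, in which every vertex has
degree at most two. -/
def IsSimpleTwoMatching (B : Finset (Sym2 V)) : Prop :=
  B ⊆ G.edgeFinset ∧ ∀ v : V, (B.filter (fun e => v ∈ e)).card ≤ 2

/-- The maximum weight `M` of a simple 2-matching of `G`. The supremum is attained, as there are
finitely many candidates, including `∅`. -/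
noncomputable def maxTwoMatchingWeight (W : Sym2 V → ℝ) : ℝ :=
  ⨆ B : {B : Finset (Sym2 V) // IsSimpleTwoMatching G B}, ∑ e ∈ B.1, W e

variable {G}

theorem IsSimpleTwoMatching.sum_le_maxTwoMatchingWeight {B : Finset (Sym2 V)}
    (hB : IsSimpleTwoMatching G B) (W : Sym2 V → ℝ) :
    ∑ e ∈ B, W e ≤ maxTwoMatchingWeight G W :=
  le_ciSup (f := fun B : {B : Finset (Sym2 V) // IsSimpleTwoMatching G B} => ∑ e ∈ B.1, W e)
    (Set.finite_range _).bddAbove ⟨B, hB⟩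

theorem isSimpleTwoMatching_empty : IsSimpleTwoMatching G ∅ :=
  ⟨Finset.empty_subset _, fun _ => by simp⟩

theorem isSimpleTwoMatching_filter_pairDist_eq {pos : V → ℕ} (hpos : Function.Injective pos)
    (i : ℕ) : IsSimpleTwoMatching G (G.edgeFinset.filter fun e => pairDist pos e = i) :=
  ⟨Finset.filter_subset _ _, card_filter_pairDist_eq_le_two hpos _ i⟩

theorem maxTwoMatchingWeight_nonneg (W : Sym2 V → ℝ) : 0 ≤ maxTwoMatchingWeight G W := by
  simpa only [Finset.sum_empty] using isSimpleTwoMatching_empty.sum_le_maxTwoMatchingWeight W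

theorem sum_mul_pairDist_le_sum_mul_maxTwoMatchingWeight {pos : V → ℕ} {n : ℕ}
    (hpos : Function.Injective pos) (hlt : ∀ v, pos v < n) {f : ℕ → ℝ}
    (hf : ∀ i ∈ Finset.Ico 1 n, 0 ≤ f i) (W : Sym2 V → ℝ) :
    ∑ e ∈ G.edgeFinset, f (pairDist pos e) * W e ≤
      (∑ i ∈ Finset.Ico 1 n, f i) * maxTwoMatchingWeight G W := by
  have hmaps : ∀ e ∈ G.edgeFinset, pairDist pos e ∈ Finset.Ico 1 n := fun e he =>
    pairDist_mem_Ico hpos hlt (G.not_isDiag_of_mem_edgeFinset he)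
  calc ∑ e ∈ G.edgeFinset, f (pairDist pos e) * W e
      = ∑ i ∈ Finset.Ico 1 n, ∑ e ∈ G.edgeFinset with pairDist pos e = i,
          f (pairDist pos e) * W e := (Finset.sum_fiberwise_of_maps_to hmaps _).symm
    _ = ∑ i ∈ Finset.Ico 1 n, f i * ∑ e ∈ G.edgeFinset with pairDist pos e = i, W e := by
        refine Finset.sum_congr rfl fun i _ => ?_
        rw [Finset.mul_sum]
        exact Finset.sum_congr rfl fun e he => by rw [(Finset.mem_filter.mp he).2]
    _ ≤ ∑ i ∈ Finset.Ico 1 n, f i * maxTwoMatchingWeight G W := by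
        gcongr with i hi
        · exact hf i hi
        · exact (isSimpleTwoMatching_filter_pairDist_eq hpos i).sum_le_maxTwoMatchingWeight W
    _ = (∑ i ∈ Finset.Ico 1 n, f i) * maxTwoMatchingWeight G W := (Finset.sum_mul _ _ _).symm

end SimpleTwoMatching

theorem sum_Ico_one_le_of_le_one_of_eq_zero {R : Type*} [Semiring R] [PartialOrder R]
    [IsOrderedRing R] {f : ℕ → R} {k : ℕ} (hf_le : ∀ i, 1 ≤ i → f i ≤ 1)
    (hf_zero : ∀ i, k < i → f i = 0) (n : ℕ) : ∑ i ∈ Finset.Ico 1 n, f i ≤ k := by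
  calc ∑ i ∈ Finset.Ico 1 n, f i
      ≤ ∑ i ∈ Finset.Ico 1 n, if i ∈ Finset.Icc 1 k then 1 else 0 := by
        refine Finset.sum_le_sum fun i hi => ?_
        have hi_one : 1 ≤ i := (Finset.mem_Ico.mp hi).1
        split_ifs with hik
        · exact hf_le i hi_one
        · exact (hf_zero i (by simp only [Finset.mem_Icc] at hik; omega)).le
    _ = ((Finset.Ico 1 n ∩ Finset.Icc 1 k).card : R) := by
        rw [Finset.sum_boole, Finset.filter_mem_eq_inter]
    _ ≤ ((Finset.Icc 1 k).card : R) := by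
        gcongr
        exact Finset.inter_subset_right
    _ = k := by rw [Nat.card_Icc, Nat.add_sub_cancel]

theorem extVal_eq_sum_edgeFinset {V : Type} [Fintype V]
    (G : SimpleGraph V) [DecidableRel G.Adj] (W : Sym2 V → ℝ)
    (f : ℕ → ℝ) (d : V ≃ Fin (Fintype.card V)) :
    extVal G (fun u v => W s(u, v)) f d =
      ∑ e ∈ G.edgeFinset, f (pairDist (fun v => d v) e) * W e := by
  have hdouble : (∑ u, ∑ v,
      if G.Adj u v then f (Nat.dist (d u) (d v)) * W s(u, v) else 0) =
        2 • ∑ e ∈ G.edgeFinset, f (pairDist (fun v => d v) e) * W e :=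
    sum_sum_adj_eq_two_nsmul_sum_edgeFinset G fun e => f (pairDist (fun v => d v) e) * W e
  have hval : extVal G (fun u v => W s(u, v)) f d = (1 / 2) * ∑ u, ∑ v,
      if G.Adj u v then f (Nat.dist (d u) (d v)) * W s(u, v) else 0 := by
    -- `extVal` decides adjacency classically, so the two sides differ in their instances.
    unfold extVal
    congr!
  rw [hval, hdouble, two_nsmul, ← two_mul, one_div, inv_mul_cancel_left₀ two_ne_zero]

theorem extTSP_le_k_mul_two_matching_general {V : Type} [Fintype V] [DecidableEq V]
    (G : SimpleGraph V) [DecidableRel G.Adj] (w : V → V → ℝ) (hw_symm : ∀ u v, w u v = w v u)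
    (f : ℕ → ℝ) (hf_nonneg : ∀ i ∈ Finset.Ico 1 (Fintype.card V), 0 ≤ f i) :
    (⨆ d : V ≃ Fin (Fintype.card V), extVal G w f d) ≤
      (∑ i ∈ Finset.Ico 1 (Fintype.card V), f i) *
        maxTwoMatchingWeight G (Sym2.lift ⟨w, hw_symm⟩) := by
  have : Nonempty (V ≃ Fin (Fintype.card V)) := ⟨Fintype.equivFin V⟩
  refine ciSup_le fun d => ?_
  have hpos : Function.Injective fun v => (d v : ℕ) := Fin.val_injective.comp d.injective
  exact (extVal_eq_sum_edgeFinset G (Sym2.lift ⟨w, hw_symm⟩) f d).trans_le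
    (sum_mul_pairDist_le_sum_mul_maxTwoMatchingWeight hpos (fun v => (d v).isLt) hf_nonneg _)

/-- Let `M` be the maximum weight of a simple 2-matching (a set of edges in
which every vertex is incident to at most two of them).  Then `OPT ≤ k·M`. -/
theorem extTSP_le_k_mul_two_matching {V : Type} [Fintype V] [DecidableEq V]
    (G : SimpleGraph V) [DecidableRel G.Adj]
    (w : V → V → ℝ) (hw_symm : ∀ u v, w u v = w v u)
    (hw_pos : ∀ u v, G.Adj u v → 0 < w u v)
    (k : ℕ) (hk : 1 ≤ k)
    (f : ℕ → ℝ) (hf_nonneg : ∀ i, 0 ≤ f i) (hf_mono : Antitone f)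
    (hf_one : f 1 = 1) (hf_zero : ∀ i, k < i → f i = 0) :
    (⨆ d : V ≃ Fin (Fintype.card V), extVal G w f d)
      ≤ (k : ℝ) *
        ⨆ B : {B : Finset (Sym2 V) // B ⊆ G.edgeFinset ∧
            ∀ v : V, (B.filter (fun e => v ∈ e)).card ≤ 2},
          ∑ e ∈ B.1, Sym2.lift ⟨w, hw_symm⟩ e := by
  have hf_le : ∀ i, 1 ≤ i → f i ≤ 1 := fun i hi => (hf_mono hi).trans_eq hf_one
  exact (extTSP_le_k_mul_two_matching_general G w hw_symm f fun i _ => hf_nonneg i).trans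
    (mul_le_mul_of_nonneg_right (sum_Ico_one_le_of_le_one_of_eq_zero hf_le hf_zero _)
      (maxTwoMatchingWeight_nonneg _))
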